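/- Let 0 < τ < 2, α = 1 − τ²/2, β = √(τ² − τ⁴/4), and let p, q ∈ S^{d−1} with ‖p − q‖ = τ. Let A be a d×d random matrix with i.i.d. standard Gaussian entries and h_A the cross-polytope hash. Then Pr_A[h_A(p) = h_A(q)] = 2d · E_{X₁,Y₁}[ (Pr_{X₂,Y₂}[ |X₂| ≤ X₁ and |αX₂ + βY₂| ≤ αX₁ + βY₁ ])^{d−1} ], where X₁, Y₁, X₂, Y₂ are independent standard Gaussian random variables (the inner probability is over X₂, Y₂ with X₁, Y₁ fixed). -/

import Mathlib

open MeasureTheory ProbabilityTheory Real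

noncomputable section

/-- The standard Gaussian distribution `N(0,1)` on `ℝ`. -/
def stdGaussian : Measure ℝ := gaussianReal 0 1

/-- The distribution of a pair of independent standard Gaussians. -/
def gauss2 : Measure (ℝ × ℝ) := stdGaussian.prod stdGaussian

/-- The distribution of a `d × d` random matrix with i.i.d. standard Gaussian entries. -/
def gaussMatrix (d : ℕ) : Measure (Fin d → Fin d → ℝ) :=
  Measure.pi fun _ => Measure.pi fun _ => stdGaussian

/-- The vertices `{±e_1, …, ±e_d}` of the cross-polytope in `ℝ^d`. -/
def crossPolytope (d : ℕ) : Set (EuclideanSpace ℝ (Fin d)) :=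
  {y | ∃ i : Fin d, y = EuclideanSpace.single i (1 : ℝ) ∨ y = EuclideanSpace.single i (-1 : ℝ)}

/-- Matrix-vector multiplication `A x`, viewed in Euclidean space. -/
def matVec {d : ℕ} (A : Fin d → Fin d → ℝ) (x : EuclideanSpace ℝ (Fin d)) :
    EuclideanSpace ℝ (Fin d) :=
  (WithLp.equiv 2 (Fin d → ℝ)).symm (fun i => ∑ j, A i j * x j)

/-- `h` is a cross-polytope hash family: for every matrix `A` and point `x`, the hash `h A x`
is a point of `{±e_1, …, ±e_d}` closest (in Euclidean distance) to `Ax / ‖Ax‖`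
(ties, which occur with probability zero, are broken arbitrarily). -/
def IsCPHash {d : ℕ}
    (h : (Fin d → Fin d → ℝ) → EuclideanSpace ℝ (Fin d) → EuclideanSpace ℝ (Fin d)) : Prop :=
  ∀ A x, h A x ∈ crossPolytope d ∧
    ∀ z ∈ crossPolytope d,
      dist (‖matVec A x‖⁻¹ • matVec A x) (h A x) ≤ dist (‖matVec A x‖⁻¹ • matVec A x) z

lemma charFunDual_std (L : StrongDual ℝ ℝ) :
    charFunDual (gaussianReal 0 1) L = Complex.exp (-((L 1 ^ 2 : ℝ) : ℂ) / 2) := by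
  have h1 : charFunDual (gaussianReal 0 1) L = charFun (gaussianReal 0 1) (L 1) := by
    rw [charFunDual_apply, charFun_apply_real]
    congr 1 with x
    have : L x = L 1 * x := by
      have := L.map_smul x 1
      simp only [smul_eq_mul, mul_one] at this
      rw [this, mul_comm]
    rw [this]; push_cast; ring_nf
  rw [h1, charFun_gaussianReal]
  congr 1
  push_cast
  ring

instance isProb_std : IsProbabilityMeasure (_root_.stdGaussian) := by
  unfold _root_.stdGaussian; infer_instance

instance isProb_gauss2 : IsProbabilityMeasure gauss2 := by
  unfold gauss2; infer_instance

lemma pair_law {d : ℕ} (p r : Fin d → ℝ) (hp : ∑ i, p i ^ 2 = 1) (hr : ∑ i, r i ^ 2 = 1)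
    (hpr : ∑ i, p i * r i = 0) :
    (Measure.pi fun _ : Fin d => (_root_.stdGaussian : Measure ℝ)).map
      (fun a => ((∑ j, a j * p j, ∑ j, a j * r j) : ℝ × ℝ)) = gauss2 := by
  let f : (Fin d → ℝ) →L[ℝ] ℝ × ℝ :=
    ContinuousLinearMap.prod (∑ j, p j • ContinuousLinearMap.proj j)
      (∑ j, r j • ContinuousLinearMap.proj j)
  have hf : (fun a : Fin d → ℝ => ((∑ j, a j * p j, ∑ j, a j * r j) : ℝ × ℝ)) = f := by
    ext a <;> simp [f, mul_comm]
  rw [hf]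
  unfold gauss2 _root_.stdGaussian
  have : IsProbabilityMeasure ((Measure.pi fun _ : Fin d => gaussianReal 0 1).map f) :=
    Measure.isProbabilityMeasure_map f.continuous.measurable.aemeasurable
  apply Measure.ext_of_charFunDual
  ext L
  rw [charFunDual_map, charFunDual_pi, charFunDual_prod]
  simp_rw [charFunDual_std]
  rw [← Complex.exp_sum, ← Complex.exp_add]
  congr 1
  have key : ∀ i, L (f (Pi.single i 1)) = p i * L (1, 0) + r i * L (0, 1) := by
    intro i
    have : f (Pi.single i 1) = p i • ((1, 0) : ℝ × ℝ) + r i • ((0, 1) : ℝ × ℝ) := by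
      ext <;> simp [f, Pi.single_apply]
    rw [this, map_add, map_smul, map_smul]; simp
  have e : ∑ i, (L (f (Pi.single i 1))) ^ 2 = L (1, 0) ^ 2 + L (0, 1) ^ 2 := by
    calc ∑ i, (L (f (Pi.single i 1))) ^ 2
        = ∑ i, (p i ^ 2 * L (1, 0) ^ 2 + r i ^ 2 * L (0, 1) ^ 2
            + p i * r i * (2 * L (1, 0) * L (0, 1))) :=
          Finset.sum_congr rfl fun i _ => by rw [key]; ring
      _ = _ := by
          rw [Finset.sum_add_distrib, Finset.sum_add_distrib, ← Finset.sum_mul, ← Finset.sum_mul,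
            ← Finset.sum_mul, hp, hr, hpr]; ring
  have e2 := congrArg (fun x : ℝ => -(x : ℂ) / 2) e
  simp only [Complex.ofReal_sum, Complex.ofReal_add] at e2
  simp only [ContinuousLinearMap.comp_apply, ContinuousLinearMap.single_apply,
    ContinuousLinearMap.inl_apply, ContinuousLinearMap.inr_apply]
  rw [← Finset.sum_div, Finset.sum_neg_distrib, e2]
  ring

/-- The sign attached to a boolean. -/
def sgn (b : Bool) : ℝ := if b then 1 else -1

/-- Coordinates of the product `A x`. -/
def coords {d : ℕ} (A : Fin d → Fin d → ℝ) (x : Fin d → ℝ) (i : Fin d) : ℝ := ∑ j, A i j * x j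

/-- No ties. -/
def NoTies {d : ℕ} (u : Fin d → ℝ) : Prop :=
  (∀ i, u i ≠ 0) ∧ ∀ i j, i ≠ j → |u i| ≠ |u j|

lemma dom_unique {d : ℕ} {u : Fin d → ℝ} (hu : NoTies u) {i i' : Fin d} {b b' : Bool}
    (h1 : ∀ j, |u j| ≤ sgn b * u i) (h2 : ∀ j, |u j| ≤ sgn b' * u i') : (i, b) = (i', b') := by
  have hle : ∀ (b : Bool) (x : ℝ), sgn b * x ≤ |x| := by
    intro b x
    cases b <;> simp [sgn, neg_le_abs, le_abs_self]
  have hi : i = i' := by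
    by_contra hne
    exact hu.2 i i' hne (le_antisymm ((h2 i).trans (hle _ _)) ((h1 i').trans (hle _ _)))
  subst hi
  have h0 := abs_pos.2 (hu.1 i)
  have a1 := h1 i
  have a2 := h2 i
  cases b <;> cases b' <;> simp only [sgn] at * <;> simp at a1 a2 ⊢ <;> linarith

lemma sgn_sq (b : Bool) : sgn b ^ 2 = 1 := by cases b <;> simp [sgn]

lemma mem_cp {d : ℕ} (i : Fin d) (b : Bool) :
    EuclideanSpace.single i (sgn b) ∈ crossPolytope d := by
  cases b
  · exact ⟨i, Or.inr (by simp [sgn])⟩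
  · exact ⟨i, Or.inl (by simp [sgn])⟩

lemma hash_spec {d : ℕ}
    {h : (Fin d → Fin d → ℝ) → EuclideanSpace ℝ (Fin d) → EuclideanSpace ℝ (Fin d)}
    (hh : IsCPHash h) (A : Fin d → Fin d → ℝ) (x : EuclideanSpace ℝ (Fin d)) :
    ∃ i b, h A x = EuclideanSpace.single i (sgn b) ∧
      ∀ j, |coords A x j| ≤ sgn b * coords A x i := by
  obtain ⟨hm, hd⟩ := hh A x
  have hex : ∃ i b, h A x = EuclideanSpace.single i (sgn b) := by
    obtain ⟨i, hi | hi⟩ := hm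
    · exact ⟨i, true, by simp [hi, sgn]⟩
    · exact ⟨i, false, by simp [hi, sgn]⟩
  obtain ⟨i, b, hib⟩ := hex
  refine ⟨i, b, hib, ?_⟩
  have hc : ∀ j, matVec A x j = coords A x j := fun j => rfl
  by_cases h0 : matVec A x = 0
  · have : ∀ j, coords A x j = 0 := fun j => by rw [← hc, h0]; rfl
    intro j; simp [this]
  have hn : 0 < ‖matVec A x‖⁻¹ := inv_pos.2 (norm_pos_iff.2 h0)
  set t := ‖matVec A x‖⁻¹ with ht
  have hdist : ∀ j c, dist (t • matVec A x) (EuclideanSpace.single j (sgn c)) ^ 2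
      = ‖t • matVec A x‖ ^ 2 - 2 * (t * (sgn c * coords A x j)) + 1 := by
    intro j c
    rw [dist_eq_norm, norm_sub_sq_real]
    congr 1
    · congr 2
      rw [EuclideanSpace.inner_single_right]
      simp [hc]; ring
    · rw [PiLp.norm_single, Real.norm_eq_abs, sq_abs, sgn_sq]
  have hk : ∀ j c, sgn c * coords A x j ≤ sgn b * coords A x i := by
    intro j c
    have h1 := hd _ (mem_cp j c)
    rw [hib] at h1
    have h2 := pow_le_pow_left₀ dist_nonneg h1 2
    rw [hdist, hdist] at h2
    have h3 : t * (sgn c * coords A x j) ≤ t * (sgn b * coords A x i) := by linarith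
    exact le_of_mul_le_mul_left h3 hn
  intro j
  refine abs_le'.2 ⟨?_, ?_⟩
  · simpa [sgn] using hk j true
  · simpa [sgn] using hk j false

lemma single_inj {d : ℕ} {i i' : Fin d} {b b' : Bool}
    (h : (EuclideanSpace.single i (sgn b) : EuclideanSpace ℝ (Fin d))
      = EuclideanSpace.single i' (sgn b')) : (i, b) = (i', b') := by
  have hne : ∀ b, sgn b ≠ 0 := fun b => by cases b <;> simp [sgn]
  have h1 := congrArg (fun v : EuclideanSpace ℝ (Fin d) => v i) h
  by_cases hi : i = i'
  · subst hi
    simp at h1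
    cases b <;> cases b' <;> simp [sgn] at * <;> linarith
  · simp [hi, hne] at h1

lemma noTies_ae {d : ℕ} (μ : Measure ℝ) [IsProbabilityMeasure μ] [NullSingletonClass μ] :
    ∀ᵐ u ∂(Measure.pi fun _ : Fin d => μ), NoTies u := by
  have h0 : ∀ i : Fin d, ∀ᵐ u ∂(Measure.pi fun _ : Fin d => μ), u i ≠ 0 := by
    intro i
    have := (measurePreserving_eval (fun _ : Fin d => μ) i).quasiMeasurePreserving.ae
      (p := fun x => x ≠ 0) (by simp [ae_iff])
    exact this
  have h2 : ∀ i j : Fin d, i ≠ j → ∀ c : ℝ,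
      ∀ᵐ u ∂(Measure.pi fun _ : Fin d => μ), u i ≠ c * u j := by
    intro i j hij c
    have hind := (iIndepFun_pi (μ := fun _ : Fin d => μ) (X := fun _ => (id : ℝ → ℝ))
      (fun _ => aemeasurable_id)).indepFun hij.symm
    have hmap := hind.map_prod_eq_prod_map_map
      (measurable_pi_apply j).aemeasurable (measurable_pi_apply i).aemeasurable
    have e : ∀ k : Fin d, (Measure.pi fun _ : Fin d => μ).map (fun ω => ω k) = μ :=
      fun k => (measurePreserving_eval (fun _ : Fin d => μ) k).map_eq
    rw [e, e] at hmap
    have hz : ∀ᵐ z ∂(μ.prod μ), z.2 ≠ c * z.1 := by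
      have hmeas : MeasurableSet {z : ℝ × ℝ | ¬ (z.2 ≠ c * z.1)} := by
        simp only [ne_eq, not_not]
        exact measurableSet_eq_fun (by fun_prop) (by fun_prop)
      rw [ae_iff, Measure.measure_prod_null hmeas]
      refine Filter.Eventually.of_forall fun x => ?_
      simp [Set.preimage]
    rw [← hmap] at hz
    exact ae_of_ae_map (f := fun ω : Fin d → ℝ => (id (ω j), id (ω i)))
      ((measurable_pi_apply j).prodMk (measurable_pi_apply i)).aemeasurable hz
  have h1' : ∀ᵐ u ∂(Measure.pi fun _ : Fin d => μ), ∀ i, u i ≠ 0 := ae_all_iff.2 h0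
  have h2' : ∀ᵐ u ∂(Measure.pi fun _ : Fin d => μ), ∀ i j : Fin d, i ≠ j → |u i| ≠ |u j| := by
    rw [ae_all_iff]; intro i
    rw [ae_all_iff]; intro j
    by_cases hij : i = j
    · simp [hij]
    filter_upwards [h2 i j hij 1, h2 i j hij (-1)] with u a b _ hab
    rcases abs_eq_abs.1 hab with h | h
    · exact a (by linarith)
    · exact b (by linarith)
  filter_upwards [h1', h2'] with u a b
  exact ⟨a, b⟩

/-- The planar region appearing in the formula. -/
def regionK (α β : ℝ) (w : ℝ × ℝ) : Set (ℝ × ℝ) :=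
  {z : ℝ × ℝ | |z.1| ≤ w.1 ∧ |α * z.1 + β * z.2| ≤ α * w.1 + β * w.2}

/-- Both projections are dominated by the same signed coordinate. -/
def domSet (α β : ℝ) (d : ℕ) (k : Fin d × Bool) : Set (Fin d → ℝ × ℝ) :=
  {w | ∀ j, |(w j).1| ≤ sgn k.2 * (w k.1).1 ∧
    |α * (w j).1 + β * (w j).2| ≤ sgn k.2 * (α * (w k.1).1 + β * (w k.1).2)}

lemma measurableSet_domSet (α β : ℝ) (d : ℕ) (k : Fin d × Bool) :
    MeasurableSet (domSet α β d k) := by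
  have : domSet α β d k = ⋂ j, ({w | |(w j).1| ≤ sgn k.2 * (w k.1).1} ∩
    {w | |α * (w j).1 + β * (w j).2| ≤ sgn k.2 * (α * (w k.1).1 + β * (w k.1).2)}) := by
    ext w; simp [domSet]
  rw [this]
  refine MeasurableSet.iInter fun j => MeasurableSet.inter ?_ ?_
  · exact measurableSet_le (by fun_prop) (by fun_prop)
  · exact measurableSet_le (by fun_prop) (by fun_prop)

lemma measurableSet_regionK_prod (α β : ℝ) :
    MeasurableSet {x : (ℝ × ℝ) × (ℝ × ℝ) | x.2 ∈ regionK α β x.1} := by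
  have : {x : (ℝ × ℝ) × (ℝ × ℝ) | x.2 ∈ regionK α β x.1} =
    {x | |x.2.1| ≤ x.1.1} ∩ {x | |α * x.2.1 + β * x.2.2| ≤ α * x.1.1 + β * x.1.2} := by
    ext w; simp [regionK]
  rw [this]
  exact (measurableSet_le (by fun_prop) (by fun_prop)).inter
    (measurableSet_le (by fun_prop) (by fun_prop))

lemma measurable_regionK (α β : ℝ) : Measurable fun w => gauss2 (regionK α β w) :=
  measurable_measure_prodMk_left (measurableSet_regionK_prod α β)

lemma domSet_true (α β : ℝ) (n : ℕ) (i : Fin (n + 2)) :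
    (Measure.pi fun _ : Fin (n + 2) => gauss2) (domSet α β (n + 2) (i, true))
      = ∫⁻ w, gauss2 (regionK α β w) ^ (n + 1) ∂gauss2 := by
  have hmp := measurePreserving_piFinSuccAbove (fun _ : Fin (n + 2) => gauss2) i
  have hset : domSet α β (n + 2) (i, true) =
      (MeasurableEquiv.piFinSuccAbove (fun _ : Fin (n + 2) => ℝ × ℝ) i) ⁻¹'
        {x | ∀ j : Fin (n + 1), x.2 j ∈ regionK α β x.1} := by
    ext w
    simp only [domSet, sgn, Set.mem_ofPred_eq, if_true, one_mul, Set.mem_preimage, regionK,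
      MeasurableEquiv.piFinSuccAbove_apply, Fin.insertNthEquiv_symm_apply, Fin.removeNth]
    rw [Fin.forall_iff_succAbove i]
    refine ⟨fun h => h.2, fun h => ⟨?_, h⟩⟩
    obtain ⟨h1, h2⟩ := h 0
    exact ⟨(abs_of_nonneg ((abs_nonneg _).trans h1)).le,
      (abs_of_nonneg ((abs_nonneg _).trans h2)).le⟩
  have hms : MeasurableSet {x : (ℝ × ℝ) × (Fin (n + 1) → ℝ × ℝ) |
      ∀ j : Fin (n + 1), x.2 j ∈ regionK α β x.1} := by
    rw [Set.ofPred_forall]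
    refine MeasurableSet.iInter fun j => ?_
    have hf : Measurable fun x : (ℝ × ℝ) × (Fin (n + 1) → ℝ × ℝ) => (x.1, x.2 j) := by fun_prop
    exact hf (measurableSet_regionK_prod α β)
  rw [hset, hmp.measure_preimage hms.nullMeasurableSet, Measure.prod_apply hms]
  congr 1 with w
  have : Prod.mk w ⁻¹' {x : (ℝ × ℝ) × (Fin (n + 1) → ℝ × ℝ) |
      ∀ j : Fin (n + 1), x.2 j ∈ regionK α β x.1} = Set.univ.pi fun _ => regionK α β w := by
    ext z; simp
  rw [this, Measure.pi_pi]
  simp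

lemma gauss2_neg : MeasurePreserving (fun z : ℝ × ℝ => -z) gauss2 gauss2 := by
  have h1 : MeasurePreserving (fun x : ℝ => -x) (_root_.stdGaussian) (_root_.stdGaussian) := by
    refine ⟨measurable_neg, ?_⟩
    unfold _root_.stdGaussian
    rw [gaussianReal_map_neg, neg_zero]
  exact h1.prod h1

lemma domSet_any (α β : ℝ) (n : ℕ) (k : Fin (n + 2) × Bool) :
    (Measure.pi fun _ : Fin (n + 2) => gauss2) (domSet α β (n + 2) k)
      = ∫⁻ w, gauss2 (regionK α β w) ^ (n + 1) ∂gauss2 := by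
  obtain ⟨i, b⟩ := k
  cases b
  swap
  · exact domSet_true α β n i
  rw [← domSet_true α β n i]
  have hmp := measurePreserving_pi (fun _ : Fin (n + 2) => gauss2)
    (fun _ : Fin (n + 2) => gauss2) (fun _ => gauss2_neg)
  rw [← hmp.measure_preimage (measurableSet_domSet α β _ (i, true)).nullMeasurableSet]
  congr 1
  ext w
  simp only [domSet, sgn, Set.mem_ofPred_eq, Set.mem_preimage, Prod.fst_neg, Prod.snd_neg, abs_neg]
  refine forall_congr' fun j => ?_
  rw [show α * -(w j).1 + β * -(w j).2 = -(α * (w j).1 + β * (w j).2) by ring, abs_neg]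
  simp
  intro _
  constructor <;> intro h <;> linarith

lemma noTies_coords {d : ℕ} (p r : Fin d → ℝ) (hp : ∑ i, p i ^ 2 = 1) (hr : ∑ i, r i ^ 2 = 1)
    (hpr : ∑ i, p i * r i = 0) : ∀ᵐ A ∂(gaussMatrix d), NoTies (coords A p) := by
  have hmap : (Measure.pi fun _ : Fin d => (_root_.stdGaussian : Measure ℝ)).map
      (fun a => ∑ j, a j * p j) = _root_.stdGaussian := by
    have h := congrArg (Measure.map Prod.fst) (pair_law p r hp hr hpr)
    rw [Measure.map_map measurable_fst (by fun_prop)] at h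
    simpa [gauss2, Function.comp_def] using h
  have hmp : MeasurePreserving (fun a : Fin d → ℝ => ∑ j, a j * p j)
    (Measure.pi fun _ : Fin d => (_root_.stdGaussian : Measure ℝ)) (_root_.stdGaussian) :=
    ⟨by fun_prop, hmap⟩
  have hmp2 := measurePreserving_pi
    (fun _ : Fin d => Measure.pi fun _ : Fin d => (_root_.stdGaussian : Measure ℝ))
    (fun _ : Fin d => _root_.stdGaussian) (fun _ => hmp)
  have : NullSingletonClass (_root_.stdGaussian : Measure ℝ) := by
    unfold _root_.stdGaussian
    exact nullSingletonClass_gaussianReal one_ne_zero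
  exact hmp2.quasiMeasurePreserving.ae (noTies_ae _)

/-- For unit vectors `p, q` at distance `τ`, the collision probability of the cross-polytope
hash equals `2d · E_{X₁,Y₁}[ Pr_{X₂,Y₂}[|X₂| ≤ X₁ ∧ |αX₂ + βY₂| ≤ αX₁ + βY₁]^{d-1} ]`. -/
theorem cross_polytope_collision_probability_formula
    (τ : ℝ) (hτ0 : 0 < τ) (hτ2 : τ < 2) (α β : ℝ)
    (hα : α = 1 - τ ^ 2 / 2) (hβ : β = Real.sqrt (τ ^ 2 - τ ^ 4 / 4))
    (d : ℕ)
    (h : (Fin d → Fin d → ℝ) → EuclideanSpace ℝ (Fin d) → EuclideanSpace ℝ (Fin d))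
    (hh : IsCPHash h)
    (p q : EuclideanSpace ℝ (Fin d)) (hp : ‖p‖ = 1) (hq : ‖q‖ = 1) (hpq : dist p q = τ) :
    (gaussMatrix d {A | h A p = h A q}).toReal
      = 2 * d * ∫ w : ℝ × ℝ,
          ((gauss2 {z : ℝ × ℝ | |z.1| ≤ w.1 ∧ |α * z.1 + β * z.2| ≤ α * w.1 + β * w.2}).toReal)
            ^ (d - 1) ∂gauss2 := by

  have hα2 : α ^ 2 + β ^ 2 = 1 := by
    have h1 : 0 ≤ τ ^ 2 - τ ^ 4 / 4 := by
      have : 0 < τ ^ 2 * (4 - τ ^ 2) := mul_pos (by positivity) (by nlinarith)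
      nlinarith
    rw [hβ, Real.sq_sqrt h1, hα]; ring
  have hβ0 : 0 < β := by
    rw [hβ]; apply Real.sqrt_pos.2
    have : 0 < τ ^ 2 * (4 - τ ^ 2) := mul_pos (by positivity) (by nlinarith)
    nlinarith
  have sp : ∑ i, p i ^ 2 = 1 := by
    rw [← EuclideanSpace.real_norm_sq_eq, hp]; norm_num
  have sq : ∑ i, q i ^ 2 = 1 := by
    rw [← EuclideanSpace.real_norm_sq_eq, hq]; norm_num
  have spq : ∑ i, p i * q i = α := by
    have h1 : ∑ i, (p i - q i) ^ 2 = τ ^ 2 := by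
      rw [← hpq, dist_eq_norm, EuclideanSpace.real_norm_sq_eq]; rfl
    have h2 : ∑ i, (p i - q i) ^ 2
        = ∑ i, p i ^ 2 + ∑ i, q i ^ 2 - 2 * ∑ i, p i * q i := by
      rw [Finset.mul_sum, ← Finset.sum_add_distrib, ← Finset.sum_sub_distrib]
      exact Finset.sum_congr rfl fun i _ => by ring
    rw [hα]; linarith
  obtain ⟨n, rfl⟩ : ∃ n, d = n + 2 := by
    rcases d with _ | _ | n
    · simp at sp
    · exfalso
      simp at sp sq spq
      have : α ^ 2 = 1 := by
        rw [← spq, mul_pow]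
        rcases sp with h | h <;> rcases sq with h' | h' <;> simp [h, h']
      nlinarith
    · exact ⟨n, rfl⟩
  set r : Fin (n + 2) → ℝ := fun i => (q i - α * p i) / β with hr
  have hqr : ∀ i, q i = α * p i + β * r i := by
    intro i; simp only [hr]; field_simp; ring
  have spr : ∑ i, p i * r i = 0 := by
    have : ∑ i, p i * r i = (∑ i, p i * q i - α * ∑ i, p i ^ 2) / β := by
      rw [Finset.mul_sum, ← Finset.sum_sub_distrib, Finset.sum_div]
      exact Finset.sum_congr rfl fun i _ => by simp only [hr]; ring
    rw [this, spq, sp]; simp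
  have sr : ∑ i, r i ^ 2 = 1 := by
    have : ∑ i, q i ^ 2
        = α ^ 2 * ∑ i, p i ^ 2 + β ^ 2 * ∑ i, r i ^ 2 + 2 * α * β * ∑ i, p i * r i := by
      rw [Finset.mul_sum, Finset.mul_sum, Finset.mul_sum, ← Finset.sum_add_distrib,
        ← Finset.sum_add_distrib]
      exact Finset.sum_congr rfl fun i _ => by rw [hqr]; ring
    rw [sq, sp, spr] at this
    have h3 : β ^ 2 * ∑ i, r i ^ 2 = β ^ 2 * 1 := by linarith
    exact mul_left_cancel₀ (by positivity) h3
  -- a unit vector orthogonal to `q`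
  have tp := noTies_coords p r sp sr spr
  have tq : ∀ᵐ A ∂(gaussMatrix (n + 2)), NoTies (coords A q) := by
    refine noTies_coords q (fun i => β * p i - α * r i) sq ?_ ?_
    · have : ∑ i, (β * p i - α * r i) ^ 2
          = β ^ 2 * ∑ i, p i ^ 2 + α ^ 2 * ∑ i, r i ^ 2 - 2 * α * β * ∑ i, p i * r i := by
        rw [Finset.mul_sum, Finset.mul_sum, Finset.mul_sum, ← Finset.sum_add_distrib,
          ← Finset.sum_sub_distrib]
        exact Finset.sum_congr rfl fun i _ => by ring
      rw [this, sp, sr, spr]; linarith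
    · have : ∑ i, q i * (β * p i - α * r i)
          = α * β * ∑ i, p i ^ 2 - α * β * ∑ i, r i ^ 2
            + (β ^ 2 - α ^ 2) * ∑ i, p i * r i := by
        rw [Finset.mul_sum, Finset.mul_sum, Finset.mul_sum, ← Finset.sum_sub_distrib,
          ← Finset.sum_add_distrib]
        exact Finset.sum_congr rfl fun i _ => by rw [hqr]; ring
      rw [this, sp, sr, spr]; ring
  have hmp : MeasurePreserving
      (fun (A : Fin (n + 2) → Fin (n + 2) → ℝ) i => ((coords A p i, coords A r i) : ℝ × ℝ))
      (gaussMatrix (n + 2)) (Measure.pi fun _ => gauss2) :=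
    measurePreserving_pi
      (fun _ : Fin (n + 2) => Measure.pi fun _ : Fin (n + 2) => (_root_.stdGaussian : Measure ℝ))
      (fun _ => gauss2) (fun _ => ⟨by fun_prop, pair_law p r sp sr spr⟩)
  set T : (Fin (n + 2) → Fin (n + 2) → ℝ) → Fin (n + 2) → ℝ × ℝ :=
    fun A i => (coords A p i, coords A r i) with hT
  have hcq : ∀ A i, α * (T A i).1 + β * (T A i).2 = coords A q i := by
    intro A i
    simp only [hT, coords, Finset.mul_sum, ← Finset.sum_add_distrib]
    exact Finset.sum_congr rfl fun j _ => by rw [hqr]; ring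
  have hmem : ∀ A k, T A ∈ domSet α β (n + 2) k ↔
      (∀ j, |coords A p j| ≤ sgn k.2 * coords A p k.1) ∧
      (∀ j, |coords A q j| ≤ sgn k.2 * coords A q k.1) := by
    intro A k
    simp only [domSet, Set.mem_ofPred_eq, hcq, forall_and]
    rfl
  have hae : ({A | h A p = h A q} : Set _) =ᵐ[gaussMatrix (n + 2)]
      (⋃ k, T ⁻¹' domSet α β (n + 2) k : Set _) := by
    rw [Filter.eventuallyEq_set]
    filter_upwards [tp, tq] with A hA1 hA2
    simp only [Set.mem_ofPred_eq, Set.mem_iUnion, Set.mem_preimage, hmem]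
    obtain ⟨i, b, e1, f1⟩ := hash_spec hh A p
    obtain ⟨i', b', e2, f2⟩ := hash_spec hh A q
    constructor
    · intro he
      rw [e1, e2] at he
      obtain ⟨rfl, rfl⟩ := Prod.mk.inj (single_inj he)
      exact ⟨(i, b), f1, f2⟩
    · rintro ⟨⟨i₀, b₀⟩, g1, g2⟩
      obtain ⟨rfl, rfl⟩ := Prod.mk.inj (dom_unique hA1 f1 g1)
      obtain ⟨rfl, rfl⟩ := Prod.mk.inj (dom_unique hA2 f2 g2)
      rw [e1, e2]
  have hdisj : Pairwise (Function.onFun (AEDisjoint (gaussMatrix (n + 2)))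
      fun k => T ⁻¹' domSet α β (n + 2) k) := by
    intro k k' hne
    have : ∀ᵐ A ∂(gaussMatrix (n + 2)),
        ¬ A ∈ (T ⁻¹' domSet α β (n + 2) k ∩ T ⁻¹' domSet α β (n + 2) k') := by
      filter_upwards [tp] with A hA
      rintro ⟨h1, h2⟩
      rw [Set.mem_preimage, hmem] at h1 h2
      exact hne (dom_unique hA h1.1 h2.1)
    exact measure_eq_zero_iff_ae_notMem.2 this
  rw [measure_congr hae, measure_iUnion₀ hdisj fun k =>
    (hmp.measurable (measurableSet_domSet α β _ k)).nullMeasurableSet]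
  simp_rw [hmp.measure_preimage (measurableSet_domSet α β _ _).nullMeasurableSet, domSet_any]
  have hint : ∫ w : ℝ × ℝ, (gauss2 {z : ℝ × ℝ | |z.1| ≤ w.1 ∧
      |α * z.1 + β * z.2| ≤ α * w.1 + β * w.2}).toReal ^ (n + 2 - 1) ∂gauss2
      = (∫⁻ w, gauss2 (regionK α β w) ^ (n + 1) ∂gauss2).toReal := by
    rw [← integral_toReal ((measurable_regionK α β).pow_const _).aemeasurable]
    · simp only [ENNReal.toReal_pow]
      rfl
    · exact Filter.Eventually.of_forall fun w => ENNReal.pow_lt_top (measure_lt_top _ _)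
  rw [hint, tsum_fintype]
  rw [Finset.sum_const, nsmul_eq_mul, ENNReal.toReal_mul, ENNReal.toReal_natCast,
    Finset.card_univ, Fintype.card_prod, Fintype.card_fin, Fintype.card_bool]
  push_cast
  ring
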